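/- Let k be a field and A = ⊕_{m≥0} A_m an ℕ-graded integral domain with A_0 = k. Let n ≥ 0 and let f₁ ∈ A_n and f₂ ∈ A_{n+1} be nonzero homogeneous elements. Then the element f = f₂/f₁ of Frac(A) is transcendental over the subfield K^hom(A), and Frac(A) = K^hom(A)(f). In particular, if A is a finitely generated k-algebra, then the transcendence degree of K^hom(A) over k equals (Krull dimension of A) − 1. -/

import Mathlib

/-- The homogeneous fraction field `K^hom(A)` of a graded domain `A = ⊕ 𝒜 m`, viewed
inside a fraction field `F` of `A`: the subfield of `F` generated over `k` by all
fractions `a₁ / a₂` with `a₁, a₂` homogeneous of the same degree and `a₂ ≠ 0`. -/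
noncomputable def homogeneousFractionField (k : Type*) {A F : Type*} [Field k] [CommRing A]
    [IsDomain A] [Algebra k A] [Field F] [Algebra A F] [IsFractionRing A F] [Algebra k F]
    [IsScalarTower k A F] (𝒜 : ℕ → Submodule k A) : IntermediateField k F :=
  IntermediateField.adjoin k
    {x : F | ∃ m : ℕ, ∃ b₁ ∈ 𝒜 m, ∃ b₂ ∈ 𝒜 m, b₂ ≠ 0 ∧
      x = algebraMap A F b₁ / algebraMap A F b₂}

/-!
Homogeneous elements of distinct degrees are linearly independent over `K^hom(A)`: a relation can be
multiplied by a homogeneous common denominator of its coefficients, after which its terms lie in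
distinct graded pieces of `A`. Applied to the elements `f₂ ^ i * f₁ ^ (N - i)` this shows that
`f = f₂ / f₁` is transcendental. Conversely a homogeneous `a` of degree `m` is
`(a * f₁ ^ m / f₂ ^ m) * f ^ m`, whose first factor has degree zero, so `f` generates `Frac(A)`.
The dimension formula is then additivity of transcendence degrees in `k ⊆ K^hom(A) ⊆ Frac(A)`,
together with `dim A = trdeg A`, which follows from Noether normalization.
-/

open Cardinal IntermediateField

universe u v w

theorem exists_ltSeries_length_eq_of_isIntegral {R S : Type*} [CommRing R] [CommRing S]
    [Algebra R S] [FaithfulSMul R S] [Algebra.IsIntegral R S] (l : LTSeries (PrimeSpectrum R)) :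
    ∃ L : LTSeries (PrimeSpectrum S), L.length = l.length := by
  obtain ⟨⟨Q, _, _⟩⟩ := Ideal.nonempty_primesOver (S := S) l.head.asIdeal
  obtain ⟨L, hL, -⟩ := Ideal.exists_ltSeries_of_hasGoingUp l Q
  exact ⟨L, hL⟩

theorem ringKrullDim_eq_of_isIntegral (R S : Type*) [CommRing R] [CommRing S] [Algebra R S]
    [FaithfulSMul R S] [Algebra.IsIntegral R S] : ringKrullDim R = ringKrullDim S := by
  apply le_antisymm
  · refine iSup_le fun l ↦ ?_
    obtain ⟨L, hL⟩ := exists_ltSeries_length_eq_of_isIntegral (S := S) l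
    exact hL ▸ le_iSup (fun p : LTSeries (PrimeSpectrum S) ↦ (p.length : WithBot ℕ∞)) L
  · exact Order.krullDim_le_of_strictMono (PrimeSpectrum.comap (algebraMap R S))
      fun _ _ h ↦ Ideal.IsIntegral.comap_lt_comap h

theorem lift_trdeg_eq_of_isAlgebraic (R : Type*) (S : Type v) (A : Type w) [CommRing R]
    [Nontrivial R] [CommRing S] [CommRing A] [NoZeroDivisors A] [Algebra R S] [Algebra S A]
    [Algebra R A] [IsScalarTower R S A] [FaithfulSMul R S] [FaithfulSMul S A]
    [Algebra.IsAlgebraic S A] :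
    lift.{w} (Algebra.trdeg R S) = lift.{v} (Algebra.trdeg R A) := by
  simpa [trdeg_eq_zero_iff.2 ‹Algebra.IsAlgebraic S A›] using lift_trdeg_add_eq R S A

theorem ringKrullDim_eq_toENat_trdeg (k A : Type*) [Field k] [CommRing A] [IsDomain A]
    [Algebra k A] [Algebra.FiniteType k A] :
    ringKrullDim A = toENat (Algebra.trdeg k A) := by
  obtain ⟨s, g, hg, _⟩ := exists_integral_inj_algHom_of_fg k A
  algebraize [g.toRingHom]
  have : FaithfulSMul (MvPolynomial (Fin s) k) A :=
    (faithfulSMul_iff_algebraMap_injective _ _).2 hg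
  have hdim : ringKrullDim A = s := by
    simp [← ringKrullDim_eq_of_isIntegral (MvPolynomial (Fin s) k) A,
      MvPolynomial.ringKrullDim_of_isNoetherianRing]
  have htrdeg : Algebra.trdeg k A = s := by
    simpa using (lift_trdeg_eq_of_isAlgebraic k (MvPolynomial (Fin s) k) A).symm
  simp [hdim, htrdeg]

open algebraAdjoinAdjoin in
theorem trdeg_adjoin_singleton_of_transcendental {K : Type u} {F : Type v} [Field K] [Field F]
    [Algebra K F] {x : F} (hx : Transcendental K x) : Algebra.trdeg K K⟮x⟯ = 1 := by
  have hpoly : Algebra.trdeg K (Algebra.adjoin K {x}) = 1 := by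
    simpa using (Polynomial.algEquivOfTranscendental K x hx).lift_trdeg_eq.symm
  have : Algebra.IsAlgebraic (Algebra.adjoin K {x}) K⟮x⟯ :=
    IsLocalization.isAlgebraic _ (nonZeroDivisors (Algebra.adjoin K {x}))
  simpa [hpoly] using (lift_trdeg_eq_of_isAlgebraic K (Algebra.adjoin K {x}) K⟮x⟯).symm

theorem aeval_div_mul_pow_natDegree {K F : Type*} [Field K] [Field F] [Algebra K F]
    (p : Polynomial K) (x : F) {y : F} (hy : y ≠ 0) :
    Polynomial.aeval (x / y) p * y ^ p.natDegree =
      ∑ i : Fin (p.natDegree + 1), p.coeff i • (x ^ (i : ℕ) * y ^ (p.natDegree - i)) := by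
  rw [Polynomial.aeval_eq_sum_range, ← Fin.sum_univ_eq_sum_range (fun i ↦ p.coeff i • (x / y) ^ i),
    Finset.sum_mul]
  refine Finset.sum_congr rfl fun i _ ↦ ?_
  rw [smul_mul_assoc, div_pow, div_mul_eq_mul_div, mul_div_assoc, pow_sub₀ _ hy i.is_le,
    div_eq_mul_inv]

namespace homogeneousFractionField

variable {k : Type u} {A : Type v} {F : Type w} [Field k] [CommRing A] [IsDomain A] [Algebra k A]
  [Field F] [Algebra A F] [IsFractionRing A F] [Algebra k F] [IsScalarTower k A F]
  {𝒜 : ℕ → Submodule k A}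

theorem div_mem {m : ℕ} {a b : A} (ha : a ∈ 𝒜 m) (hb : b ∈ 𝒜 m) :
    algebraMap A F a / algebraMap A F b ∈ homogeneousFractionField k 𝒜 (F := F) := by
  rcases eq_or_ne b 0 with rfl | hb0
  · simp
  · exact subset_adjoin _ _ ⟨m, a, ha, b, hb, hb0, rfl⟩

variable [GradedAlgebra 𝒜]

theorem mem_iff {x : F} :
    x ∈ homogeneousFractionField k 𝒜 (F := F) ↔
      ∃ m, ∃ a ∈ 𝒜 m, ∃ b ∈ 𝒜 m, b ≠ 0 ∧ x = algebraMap A F a / algebraMap A F b := by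
  refine ⟨fun hx ↦ ?_, fun ⟨m, a, ha, b, hb, _, hx⟩ ↦ hx ▸ div_mem ha hb⟩
  induction hx using adjoin_induction with
  | mem _ hx => exact hx
  | algebraMap r =>
    exact ⟨0, algebraMap k A r, SetLike.algebraMap_mem_graded 𝒜 r, 1, SetLike.one_mem_graded 𝒜,
      one_ne_zero, by simp [← IsScalarTower.algebraMap_apply]⟩
  | add x y _ _ hx hy =>
    obtain ⟨m, a, ha, b, hb, hb0, rfl⟩ := hx
    obtain ⟨l, c, hc, d, hd, hd0, rfl⟩ := hy
    refine ⟨m + l, a * d + b * c,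
      add_mem (SetLike.mul_mem_graded ha hd) (SetLike.mul_mem_graded hb hc),
      b * d, SetLike.mul_mem_graded hb hd, mul_ne_zero hb0 hd0, ?_⟩
    rw [div_add_div _ _ (by simpa using hb0) (by simpa using hd0)]
    simp
  | inv x _ hx =>
    obtain ⟨m, a, ha, b, hb, hb0, rfl⟩ := hx
    rcases eq_or_ne a 0 with rfl | ha0
    · exact ⟨m, 0, ha, b, hb, hb0, by simp⟩
    · exact ⟨m, b, hb, a, ha, ha0, by simp⟩
  | mul x y _ _ hx hy =>
    obtain ⟨m, a, ha, b, hb, hb0, rfl⟩ := hx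
    obtain ⟨l, c, hc, d, hd, hd0, rfl⟩ := hy
    exact ⟨m + l, a * c, SetLike.mul_mem_graded ha hc, b * d, SetLike.mul_mem_graded hb hd,
      mul_ne_zero hb0 hd0, by simp [div_mul_div_comm]⟩

theorem exists_common_denominator {ι : Type*} (s : Finset ι)
    (x : ι → homogeneousFractionField k 𝒜 (F := F)) :
    ∃ d, ∃ b ∈ 𝒜 d, b ≠ 0 ∧
      ∀ i ∈ s, ∃ a ∈ 𝒜 d, algebraMap A F a = x i * algebraMap A F b := by
  classical
  induction s using Finset.induction_on with
  | empty => exact ⟨0, 1, SetLike.one_mem_graded 𝒜, one_ne_zero, by simp⟩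
  | insert j s _ ih =>
    obtain ⟨d, b, hb, hb0, hs⟩ := ih
    obtain ⟨m, a, ha, c, hc, hc0, hj⟩ := mem_iff.1 (x j).2
    have hc0' : algebraMap A F c ≠ 0 := by simpa using hc0
    refine ⟨d + m, b * c, SetLike.mul_mem_graded hb hc, mul_ne_zero hb0 hc0, fun i hi ↦ ?_⟩
    rcases Finset.mem_insert.1 hi with rfl | hi
    · refine ⟨b * a, SetLike.mul_mem_graded hb ha, ?_⟩
      rw [hj, map_mul, map_mul]
      field_simp
    · obtain ⟨a', ha', h⟩ := hs i hi
      exact ⟨a' * c, SetLike.mul_mem_graded ha' hc, by rw [map_mul, map_mul, h, mul_assoc]⟩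

theorem linearIndependent_of_injective_degree {ι : Type*} {deg : ι → ℕ}
    (hdeg : Function.Injective deg) {a : ι → A} (ha : ∀ i, a i ∈ 𝒜 (deg i))
    (ha0 : ∀ i, a i ≠ 0) :
    LinearIndependent (homogeneousFractionField k 𝒜 (F := F)) fun i ↦ algebraMap A F (a i) := by
  refine linearIndependent_iff'.2 fun s g hg ↦ ?_
  obtain ⟨d, b, -, hb0, hnum⟩ := exists_common_denominator s g
  choose! c hc hcg using hnum
  have hsum : ∑ i ∈ s, c i * a i = 0 := by
    apply IsFractionRing.injective A F
    calc algebraMap A F (∑ i ∈ s, c i * a i)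
        = ∑ i ∈ s, algebraMap A F b * (g i • algebraMap A F (a i)) := by
          rw [map_sum]
          refine Finset.sum_congr rfl fun i hi ↦ ?_
          rw [map_mul, hcg i hi, IntermediateField.smul_def, smul_eq_mul]
          ring
      _ = algebraMap A F 0 := by rw [← Finset.mul_sum, hg, mul_zero, map_zero]
  have hindep : iSupIndep fun i ↦ 𝒜 (d + deg i) :=
    (DirectSum.Decomposition.isInternal 𝒜).submodule_iSupIndep.comp
      ((add_right_injective d).comp hdeg)
  intro i hi
  have hci : c i = 0 := by
    classical
    refine (mul_eq_zero.1 ?_).resolve_right (ha0 i)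
    exact (iSupIndep_iff_finsetSum_eq_zero_imp_eq_zero _).1 hindep s _
      (fun i hi ↦ SetLike.mul_mem_graded (hc i hi) (ha i)) hsum i hi
  have hgi := hcg i hi
  rw [hci, map_zero, eq_comm, mul_eq_zero] at hgi
  simpa [hb0] using hgi

theorem linearIndependent_pow_mul_pow {m n : ℕ} (hmn : m ≠ n) {a b : A} (ha : a ∈ 𝒜 m)
    (hb : b ∈ 𝒜 n) (ha0 : a ≠ 0) (hb0 : b ≠ 0) (N : ℕ) :
    LinearIndependent (homogeneousFractionField k 𝒜 (F := F))
      fun i : Fin (N + 1) ↦ algebraMap A F (a ^ (i : ℕ) * b ^ (N - i)) := by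
  refine linearIndependent_of_injective_degree (deg := fun i : Fin (N + 1) ↦ i * m + (N - i) * n) ?_
    (fun i ↦ SetLike.mul_mem_graded (SetLike.pow_mem_graded _ ha) (SetLike.pow_mem_graded _ hb))
    (fun i ↦ mul_ne_zero (pow_ne_zero _ ha0) (pow_ne_zero _ hb0))
  intro i j hij
  have hprod : ((i : ℤ) - j) * (m - n) = 0 := by
    have hij' := congrArg (Nat.cast (R := ℤ)) hij
    push_cast [Nat.cast_sub i.is_le, Nat.cast_sub j.is_le] at hij'
    linear_combination hij'
  have hsub : (m : ℤ) - n ≠ 0 := by simpa [sub_eq_zero] using hmn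
  have hdiff := (mul_eq_zero.1 hprod).resolve_right hsub
  lia

theorem transcendental_div {m n : ℕ} (hmn : m ≠ n) {a b : A} (ha : a ∈ 𝒜 m) (hb : b ∈ 𝒜 n)
    (ha0 : a ≠ 0) (hb0 : b ≠ 0) :
    Transcendental (homogeneousFractionField k 𝒜 (F := F))
      (algebraMap A F a / algebraMap A F b) := by
  refine transcendental_iff.2 fun p hp ↦ ?_
  have hsum : ∑ i : Fin (p.natDegree + 1),
      p.coeff i • algebraMap A F (a ^ (i : ℕ) * b ^ (p.natDegree - i)) = 0 := by
    simp only [map_mul, map_pow]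
    rw [← aeval_div_mul_pow_natDegree p _ (by simpa using hb0), hp, zero_mul]
  have hindep := linearIndependent_pow_mul_pow (F := F) hmn ha hb ha0 hb0 p.natDegree
  have hcoeff := Fintype.linearIndependent_iff.1 hindep (fun i ↦ p.coeff i) hsum (Fin.last _)
  rwa [Fin.val_last, Polynomial.coeff_natDegree, Polynomial.leadingCoeff_eq_zero] at hcoeff

theorem adjoin_div_eq_top {n : ℕ} {f₁ f₂ : A} (hf₁ : f₁ ∈ 𝒜 n) (hf₂ : f₂ ∈ 𝒜 (n + 1))
    (hf₁0 : f₁ ≠ 0) (hf₂0 : f₂ ≠ 0) :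
    (homogeneousFractionField k 𝒜 (F := F))⟮algebraMap A F f₂ / algebraMap A F f₁⟯ = ⊤ := by
  have hf₁0' : algebraMap A F f₁ ≠ 0 := by simpa using hf₁0
  have hf₂0' : algebraMap A F f₂ ≠ 0 := by simpa using hf₂0
  set f := algebraMap A F f₂ / algebraMap A F f₁ with hf
  set L := (homogeneousFractionField k 𝒜 (F := F))⟮f⟯
  have mem_of_homogeneous (m : ℕ) (a : A) (ha : a ∈ 𝒜 m) : algebraMap A F a ∈ L := by
    have hnum : a * f₁ ^ m ∈ 𝒜 (m * (n + 1)) := by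
      convert! SetLike.mul_mem_graded ha (SetLike.pow_mem_graded m hf₁) using 2
      simp only [smul_eq_mul]
      ring
    have hcoeff := div_mem (F := F) hnum (SetLike.pow_mem_graded m hf₂)
    have hdecomp : algebraMap A F a =
        algebraMap A F (a * f₁ ^ m) / algebraMap A F (f₂ ^ m) * f ^ m := by
      simp only [hf, map_mul, map_pow, div_pow]
      field_simp
    rw [hdecomp]
    exact mul_mem (L.algebraMap_mem ⟨_, hcoeff⟩) (pow_mem (mem_adjoin_simple_self _ f) m)
  have mem_of_ring (a : A) : algebraMap A F a ∈ L := by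
    induction a using DirectSum.Decomposition.inductionOn 𝒜 with
    | zero => simp
    | homogeneous a => exact mem_of_homogeneous _ a a.2
    | add a b ha hb => simpa using add_mem ha hb
  refine eq_top_iff.2 fun x _ ↦ ?_
  obtain ⟨a, b, -, rfl⟩ := IsFractionRing.div_surjective (A := A) x
  exact IntermediateField.div_mem _ (mem_of_ring a) (mem_of_ring b)

theorem lift_trdeg_add_one {n : ℕ} {f₁ f₂ : A} (hf₁ : f₁ ∈ 𝒜 n) (hf₂ : f₂ ∈ 𝒜 (n + 1))
    (hf₁0 : f₁ ≠ 0) (hf₂0 : f₂ ≠ 0) :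
    lift.{v} (Algebra.trdeg k (homogeneousFractionField k 𝒜 (F := F))) + 1 =
      lift.{w} (Algebra.trdeg k A) := by
  have : Algebra.IsAlgebraic A F := IsLocalization.isAlgebraic F (nonZeroDivisors A)
  have hsimple : Algebra.trdeg (homogeneousFractionField k 𝒜 (F := F)) F = 1 := by
    have h := trdeg_adjoin_singleton_of_transcendental
      (transcendental_div (F := F) n.succ_ne_self hf₂ hf₁ hf₂0 hf₁0)
    rwa [adjoin_div_eq_top hf₁ hf₂ hf₁0 hf₂0, topEquiv.trdeg_eq] at h
  rw [lift_trdeg_eq_of_isAlgebraic k A F,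
    ← trdeg_add_eq k (homogeneousFractionField k 𝒜 (F := F)) (A := F), hsimple]
  simp

theorem exists_finset_isTranscendenceBasis_card_add_one [Algebra.FiniteType k A]
    {n : ℕ} {f₁ f₂ : A} (hf₁ : f₁ ∈ 𝒜 n) (hf₂ : f₂ ∈ 𝒜 (n + 1)) (hf₁0 : f₁ ≠ 0) (hf₂0 : f₂ ≠ 0) :
    ∃ s : Finset (homogeneousFractionField k 𝒜 (F := F)),
      IsTranscendenceBasis k ((↑) : s → homogeneousFractionField k 𝒜 (F := F)) ∧
        ((s.card + 1 : ℕ) : WithBot ℕ∞) = ringKrullDim A := by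
  have htrdeg := lift_trdeg_add_one (F := F) hf₁ hf₂ hf₁0 hf₂0
  have : FinTrdeg k (homogeneousFractionField k 𝒜 (F := F)) := by
    rw [finTrdeg_iff_trdeg, ← lift_lt_aleph0.{w, v}]
    calc _ ≤ _ := self_le_add_right _ 1
      _ = _ := htrdeg
      _ < _ := lift_lt_aleph0.2 trdeg_lt_aleph0_of_finiteType
  obtain ⟨s, hs⟩ := exists_finset_isTranscendenceBasis k (homogeneousFractionField k 𝒜 (F := F))
  refine ⟨s, hs, ?_⟩
  rw [← hs.cardinalMk_eq_trdeg] at htrdeg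
  rw [ringKrullDim_eq_toENat_trdeg k A, ← toENat_lift.{v, w}, ← htrdeg]
  simp

end homogeneousFractionField

theorem homogeneousFractionField_transcendental_and_adjoin_general
    (k : Type*) {A F : Type*} [Field k] [CommRing A] [IsDomain A] [Algebra k A]
    [Field F] [Algebra A F] [IsFractionRing A F] [Algebra k F] [IsScalarTower k A F]
    (𝒜 : ℕ → Submodule k A) [GradedAlgebra 𝒜]
    (n : ℕ) (f₁ f₂ : A) (hf₁ : f₁ ∈ 𝒜 n) (hf₂ : f₂ ∈ 𝒜 (n + 1))
    (hf₁0 : f₁ ≠ 0) (hf₂0 : f₂ ≠ 0) :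
    Transcendental (homogeneousFractionField k 𝒜 (F := F))
        (algebraMap A F f₂ / algebraMap A F f₁) ∧
    IntermediateField.adjoin k
        ((homogeneousFractionField k 𝒜 (F := F) : Set F) ∪
          {algebraMap A F f₂ / algebraMap A F f₁}) = ⊤ ∧
    (Algebra.FiniteType k A → ∀ dA : ℕ, ringKrullDim A = dA →
      ∃ s : Finset (homogeneousFractionField k 𝒜 (F := F)),
        IsTranscendenceBasis k
          (fun x : (s : Set (homogeneousFractionField k 𝒜 (F := F))) =>
            (x : (homogeneousFractionField k 𝒜 (F := F)))) ∧
        s.card + 1 = dA) := by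
  refine ⟨homogeneousFractionField.transcendental_div n.succ_ne_self hf₂ hf₁ hf₂0 hf₁0, ?_, ?_⟩
  · rw [← IntermediateField.restrictScalars_adjoin,
      homogeneousFractionField.adjoin_div_eq_top hf₁ hf₂ hf₁0 hf₂0, restrictScalars_top]
  · intro _ dA hdA
    obtain ⟨s, hs, hcard⟩ :=
      homogeneousFractionField.exists_finset_isTranscendenceBasis_card_add_one (F := F)
        hf₁ hf₂ hf₁0 hf₂0
    exact ⟨s, hs, by exact_mod_cast hcard.trans hdA⟩

/-- Let `k` be a field and `A = ⊕ A_m` an `ℕ`-graded integral domain with `A_0 = k`.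
Let `f₁ ∈ A_n`, `f₂ ∈ A_{n+1}` be nonzero homogeneous elements.  Then `f = f₂/f₁ ∈ Frac(A)`
is transcendental over `K^hom(A)`, and `Frac(A) = K^hom(A)(f)`.  In particular, if `A` is
a finitely generated `k`-algebra, the transcendence degree of `K^hom(A)` over `k` equals
`(Krull dimension of A) − 1` (expressed as: there is a finite transcendence basis `s` of
`K^hom(A)` over `k` with `#s + 1 = Krull dimension of A`). -/
theorem homogeneousFractionField_transcendental_and_adjoin
    (k : Type*) {A F : Type*} [Field k] [CommRing A] [IsDomain A] [Algebra k A]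
    [Field F] [Algebra A F] [IsFractionRing A F] [Algebra k F] [IsScalarTower k A F]
    (𝒜 : ℕ → Submodule k A) [GradedAlgebra 𝒜] (h0 : 𝒜 0 = 1)
    (n : ℕ) (f₁ f₂ : A) (hf₁ : f₁ ∈ 𝒜 n) (hf₂ : f₂ ∈ 𝒜 (n + 1))
    (hf₁0 : f₁ ≠ 0) (hf₂0 : f₂ ≠ 0) :
    Transcendental (homogeneousFractionField k 𝒜 (F := F))
        (algebraMap A F f₂ / algebraMap A F f₁) ∧
    IntermediateField.adjoin k
        ((homogeneousFractionField k 𝒜 (F := F) : Set F) ∪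
          {algebraMap A F f₂ / algebraMap A F f₁}) = ⊤ ∧
    (Algebra.FiniteType k A → ∀ dA : ℕ, ringKrullDim A = dA →
      ∃ s : Finset (homogeneousFractionField k 𝒜 (F := F)),
        IsTranscendenceBasis k
          (fun x : (s : Set (homogeneousFractionField k 𝒜 (F := F))) =>
            (x : (homogeneousFractionField k 𝒜 (F := F)))) ∧
        s.card + 1 = dA) :=
  homogeneousFractionField_transcendental_and_adjoin_general k 𝒜 n f₁ f₂ hf₁ hf₂ hf₁0 hf₂0
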